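/- Let α > 0 be a non-integer real, let d_s > 0, T_i > 0, ν > 0, ω > 0. Define F_s = −T_i 2^{α+1} d_s^{α/2} M(α/2 + 1/2, 1/2, ν²ω²) / U(α/2 + 1/2, 1/2, ν²ω²) and E_s = −ν ω M(−α/2 + 1/2, 3/2, −ν²ω²) F_s / M(−α/2, 1/2, −ν²ω²), and set Ψ_s(x,t) = t^{α/2} [ E_s M(−α/2, 1/2, −η_s²) + F_s η_s M(−α/2 + 1/2, 3/2, −η_s²) ] with η_s = x/(2√(d_s t)). Then for every x > 0, lim_{t → 0⁺} Ψ_s(x,t) = −T_i x^α. -/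

import Mathlib

noncomputable def poch (a : ℝ) (s : ℕ) : ℝ := ∏ i ∈ Finset.range s, (a + i)

/-- Kummer's confluent hypergeometric function `M(a,b,z)`,
defined by the everywhere-convergent series `M(a,b,z) = Σ_{s} (a)_s z^s / ((b)_s s!)`. -/
noncomputable def kummerM (a b z : ℝ) : ℝ :=
  ∑' s : ℕ, poch a s / (poch b s * (Nat.factorial s)) * z ^ s

/-- Tricomi's confluent hypergeometric function
`U(a,b,z) = (1/Γ(a)) ∫_0^∞ e^{−z t} t^{a−1} (1+t)^{b−a−1} dt`. -/
noncomputable def tricomiU (a b z : ℝ) : ℝ :=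
  (1 / Real.Gamma a) *
    ∫ t in Set.Ioi (0:ℝ), Real.exp (-z * t) * t ^ (a - 1) * (1 + t) ^ (b - a - 1)

theorem poch_succ (a : ℝ) (n : ℕ) : poch a (n+1) = poch a n * (a + n) := by
  simp [poch, Finset.prod_range_succ]

theorem poch_succ' (a : ℝ) (n : ℕ) : poch a (n+1) = a * poch (a+1) n := by
  unfold poch
  rw [Finset.prod_range_succ']
  rw [mul_comm]
  congr 1
  · simp
  · apply Finset.prod_congr rfl
    intro i _
    push_cast
    ring

theorem poch_pos {a : ℝ} (ha : 0 < a) (n : ℕ) : 0 < poch a n := by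
  unfold poch
  apply Finset.prod_pos
  intro i _
  positivity

theorem poch_zero (a : ℝ) : poch a 0 = 1 := by simp [poch]

theorem vander (n : ℕ) : ∀ a b : ℝ, 0 < b →
    ∑ k ∈ Finset.range (n+1), (n.choose k : ℝ) * ((-1)^k * (poch a k / poch b k))
      = poch (b - a) n / poch b n := by
  induction n with
  | zero => intro a b hb; simp [poch_zero]
  | succ n ih =>
    intro a b hb
    have h1 := ih a b hb
    have h2 := ih (a+1) (b+1) (by linarith)
    rw [Finset.sum_range_succ']
    have e : ∀ k ∈ Finset.range (n+1), ((n+1).choose (k+1) : ℝ) * ((-1)^(k+1) * (poch a (k+1) / poch b (k+1)))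
        = (n.choose (k+1) : ℝ) * ((-1)^(k+1) * (poch a (k+1) / poch b (k+1)))
          - (a / b) * ((n.choose k : ℝ) * ((-1)^k * (poch (a+1) k / poch (b+1) k))) := by
      intro k _
      rw [Nat.choose_succ_succ, poch_succ' a, poch_succ' b]
      have : poch (b+1) k ≠ 0 := (poch_pos (by linarith) k).ne'
      push_cast
      field_simp
      ring
    rw [Finset.sum_congr rfl e, Finset.sum_sub_distrib, ← Finset.mul_sum, h2]
    rw [Finset.sum_range_succ'] at h1
    rw [Finset.sum_range_succ]
    simp only [Nat.choose_succ_self, Nat.choose_zero_right] at h1 ⊢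
    have e2 : b + 1 - (a + 1) = b - a := by ring
    rw [e2]
    have e3 : poch b n * (b + n) = b * poch (b+1) n := by rw [← poch_succ, poch_succ']
    have hp : 0 < poch b n := poch_pos hb n
    have hp' : 0 < poch (b+1) n := poch_pos (by linarith) n
    have e4 : poch (b - a) (n+1) / poch b (n+1) = poch (b-a) n / poch b n - a / b * (poch (b - a) n / poch (b+1) n) := by
      rw [poch_succ, poch_succ]
      have : b + n ≠ 0 := by positivity
      have e5 : poch (b+1) n = poch b n * (b+n) / b := by rw [e3]; field_simp
      rw [e5]
      field_simp
      ring
    rw [e4, ← h1]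
    push_cast
    ring

theorem kummer_summable {a b z : ℝ} (ha : 0 < a) (hb : 0 < b) (hz : 0 < z) :
    Summable (fun s : ℕ => poch a s / (poch b s * (Nat.factorial s)) * z ^ s) := by
  have hpos : ∀ s : ℕ, 0 < poch a s / (poch b s * (Nat.factorial s)) * z ^ s := by
    intro s
    have := poch_pos ha s
    have := poch_pos hb s
    positivity
  apply summable_of_ratio_test_tendsto_lt_one (l := 0) (by norm_num)
  · exact Filter.Eventually.of_forall fun s => (hpos s).ne'
  · have h : ∀ s : ℕ, ‖poch a (s+1) / (poch b (s+1) * (Nat.factorial (s+1))) * z ^ (s+1)‖ /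
        ‖poch a s / (poch b s * (Nat.factorial s)) * z ^ s‖ = (a + s) / (b + s) * (z / ((s:ℝ)+1)) := by
      intro s
      rw [Real.norm_of_nonneg (hpos _).le, Real.norm_of_nonneg (hpos _).le, poch_succ, poch_succ, Nat.factorial_succ]
      have := poch_pos ha s
      have := poch_pos hb s
      have : b + s ≠ 0 := by positivity
      push_cast
      field_simp
      ring
    simp_rw [h]
    have t1 : Filter.Tendsto (fun s : ℕ => z / ((s:ℝ)+1)) Filter.atTop (nhds 0) := by
      have := (tendsto_one_div_add_atTop_nhds_zero_nat (𝕜 := ℝ)).const_mul z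
      simpa [mul_one_div, div_eq_mul_inv] using this
    refine squeeze_zero (fun s => by positivity) (g := fun s : ℕ => (1 + a/b) * (z / ((s:ℝ)+1))) ?_ ?_
    · intro s
      gcongr
      rw [div_le_iff₀ (by positivity)]
      have : a / b * b = a := by field_simp
      have : 0 ≤ a / b * s := by positivity
      nlinarith
    · simpa using t1.const_mul (1 + a/b)

theorem kummerM_pos {a b z : ℝ} (ha : 0 < a) (hb : 0 < b) (hz : 0 < z) : 0 < kummerM a b z := by
  unfold kummerM
  apply (kummer_summable ha hb hz).tsum_pos _ 0
  · simp [poch_zero]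
  · intro s
    have := poch_pos ha s
    have := poch_pos hb s
    positivity

theorem kummer_transf {a b z : ℝ} (ha : 0 < a) (hb : 0 < b) (hz : 0 < z) :
    kummerM (b - a) b (-z) = Real.exp (-z) * kummerM a b z := by
  rw [mul_comm]
  have he : Real.exp (-z) = ∑' n : ℕ, (-z)^n / n.factorial := by
    rw [Real.exp_eq_exp_ℝ, NormedSpace.exp_eq_tsum_div]
  have hs2 : Summable (fun n : ℕ => ‖(-z)^n / (n.factorial : ℝ)‖) := by
    have := Real.summable_pow_div_factorial z
    refine this.congr fun n => ?_
    simp [abs_of_pos hz]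
  have hs1 : Summable (fun s : ℕ => ‖poch a s / (poch b s * (Nat.factorial s)) * z ^ s‖) :=
    (kummer_summable ha hb hz).norm
  rw [he]
  unfold kummerM
  rw [tsum_mul_tsum_eq_tsum_sum_range_of_summable_norm hs1 hs2]
  congr 1
  ext n
  have hv := vander n a b hb
  have : poch (b - a) n / (poch b n * n.factorial) * (-z)^n = (poch (b - a) n / poch b n) * ((-z)^n / n.factorial) := by
    field_simp
  rw [this, ← hv, Finset.sum_mul]
  apply Finset.sum_congr rfl
  intro k hk
  have hk : k ≤ n := by simpa [Nat.lt_succ_iff] using hk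
  have hc : (n.choose k : ℝ) = n.factorial / (k.factorial * (n-k).factorial) := Nat.cast_choose ℝ hk
  rw [hc]
  have hp : (-z)^n = (-1)^k * z^k * (-z)^(n-k) := by
    rw [← mul_pow, neg_one_mul, ← pow_add, Nat.add_sub_cancel' hk]
  rw [hp]
  have h1 : ((-1:ℝ)^k) * (-1)^k = 1 := by rw [← mul_pow]; simp
  have := (poch_pos hb k).ne'
  have e : (n.factorial / (k.factorial * (n-k).factorial) : ℝ) * ((-1) ^ k * (poch a k / poch b k)) * ((-1) ^ k * z ^ k * (-z) ^ (n - k) / n.factorial)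
    = (((-1:ℝ)^k) * (-1)^k) * ((poch a k / (poch b k * k.factorial)) * z^k * ((-z)^(n-k) / (n-k).factorial)) := by
    field_simp
  rw [e, h1, one_mul]

noncomputable def gG (α η : ℝ) : ℝ := ∫ u in Set.Ioi (0:ℝ), u ^ α * Real.exp (-(u - η)^2)

theorem gG_integrable {α : ℝ} (hα : 0 < α) (η : ℝ) :
    MeasureTheory.IntegrableOn (fun u : ℝ => u ^ α * Real.exp (-(u - η)^2)) (Set.Ioi 0) := by
  have h := (integrableOn_rpow_mul_exp_neg_mul_sq (b := 1/2) (by norm_num) (s := α) (by linarith)).const_mul (Real.exp (η^2))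
  refine MeasureTheory.Integrable.mono' h ?_ ?_
  · apply Measurable.aestronglyMeasurable
    fun_prop
  · filter_upwards [MeasureTheory.ae_restrict_mem measurableSet_Ioi] with u hu
    have hu : 0 < u := hu
    rw [Real.norm_of_nonneg (by positivity)]
    have : Real.exp (-(u - η)^2) ≤ Real.exp (η^2) * Real.exp (-(1/2) * u^2) := by
      rw [← Real.exp_add]
      apply Real.exp_le_exp.mpr
      nlinarith [sq_nonneg (u - 2*η)]
    have h2 : 0 ≤ u ^ α := by positivity
    nlinarith [mul_le_mul_of_nonneg_left this h2]

theorem gG_pos {α : ℝ} (hα : 0 < α) (η : ℝ) : 0 < gG α η := by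
  unfold gG
  rw [MeasureTheory.setIntegral_pos_iff_support_of_nonneg_ae _ (gG_integrable hα η)]
  · have : Function.support (fun u : ℝ => u ^ α * Real.exp (-(u - η)^2)) ∩ Set.Ioi 0 = Set.Ioi 0 := by
      apply Set.inter_eq_right.mpr
      intro u hu
      have hu : 0 < u := hu
      simp only [Function.mem_support]
      positivity
    rw [this]
    simp
  · filter_upwards [MeasureTheory.ae_restrict_mem measurableSet_Ioi] with u hu
    have hu : 0 < u := hu
    simp only [Pi.zero_apply]
    positivity

theorem term_int {α η : ℝ} (hα : 0 < α) (m : ℕ) :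
    MeasureTheory.IntegrableOn (fun u : ℝ => u ^ α * Real.exp (-u^2) * ((2*η*u)^m / (m.factorial : ℝ))) (Set.Ioi 0) ∧
    ∫ u in Set.Ioi (0:ℝ), u ^ α * Real.exp (-u^2) * ((2*η*u)^m / (m.factorial : ℝ)) =
      1/2 * Real.Gamma ((α + m + 1)/2) * ((2*η)^m / m.factorial) := by
  have hm : (0:ℝ) ≤ m := by positivity
  have h := integrableOn_rpow_mul_exp_neg_mul_sq (b := 1) (by norm_num) (s := α + m) (by linarith)
  have h2 := integral_rpow_mul_exp_neg_rpow (p := 2) (q := α + m) (by norm_num) (by linarith)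
  have e : Set.EqOn (fun u : ℝ => ((2*η)^m / (m.factorial : ℝ)) * (u ^ (α + m) * Real.exp (-u^2)))
     (fun u : ℝ => u ^ α * Real.exp (-u^2) * ((2*η*u)^m / (m.factorial : ℝ))) (Set.Ioi 0) := by
    intro u hu
    have hu : 0 < u := hu
    simp only
    rw [Real.rpow_add hu, Real.rpow_natCast, mul_pow (2*η)]
    ring
  constructor
  · refine MeasureTheory.IntegrableOn.congr_fun ?_ e measurableSet_Ioi
    apply MeasureTheory.Integrable.const_mul
    simpa [MeasureTheory.IntegrableOn] using h
  · rw [← MeasureTheory.setIntegral_congr_fun measurableSet_Ioi e, MeasureTheory.integral_const_mul]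
    simp_rw [Real.rpow_two] at h2
    rw [h2]
    ring

theorem Gamma_poch {a : ℝ} (ha : 0 < a) (n : ℕ) : Real.Gamma (a + n) = Real.Gamma a * poch a n := by
  induction n with
  | zero => simp [poch_zero]
  | succ n ih =>
    rw [poch_succ, ← mul_assoc, ← ih]
    push_cast
    rw [← add_assoc, Real.Gamma_add_one (by positivity)]
    ring

theorem fact_even (s : ℕ) : ((2*s).factorial : ℝ) = 4^s * (poch (1/2) s * s.factorial) := by
  induction s with
  | zero => simp [poch_zero]
  | succ n ih =>
    have : 2 * (n+1) = 2*n+1+1 := by ring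
    rw [this, Nat.factorial_succ, Nat.factorial_succ, Nat.factorial_succ, poch_succ]
    push_cast
    rw [ih]
    ring

theorem fact_odd (s : ℕ) : ((2*s+1).factorial : ℝ) = 4^s * (poch (3/2) s * s.factorial) := by
  induction s with
  | zero => simp [poch_zero]
  | succ n ih =>
    have : 2 * (n+1) + 1 = 2*n+1+1+1 := by ring
    rw [this, Nat.factorial_succ (2*n+1+1), Nat.factorial_succ (2*n+1), Nat.factorial_succ n, poch_succ]
    push_cast
    rw [ih]
    ring

theorem cosh_rep {α η : ℝ} (hα : 0 < α) (hη : 0 < η) :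
    ∫ u in Set.Ioi (0:ℝ), u ^ α * Real.exp (-u^2) * Real.cosh (2*η*u)
      = 1/2 * Real.Gamma (α/2+1/2) * kummerM (α/2+1/2) (1/2) (η^2) := by
  have hval : ∀ s : ℕ, ∫ u in Set.Ioi (0:ℝ), u ^ α * Real.exp (-u^2) * ((2*η*u)^(2*s) / ((2*s).factorial : ℝ))
      = 1/2 * Real.Gamma (α/2+1/2) * (poch (α/2+1/2) s / (poch (1/2) s * (Nat.factorial s)) * (η^2) ^ s) := by
    intro s
    rw [(term_int hα (2*s)).2, fact_even]
    have e : (α + (2*s : ℕ) + 1)/2 = (α/2+1/2) + s := by push_cast; ring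
    rw [e, Gamma_poch (by positivity), pow_mul]
    have : ((2*η)^2)^s = 4^s * (η^2)^s := by rw [← mul_pow]; ring_nf
    rw [this]
    have := (poch_pos (a := 1/2) (by norm_num) s).ne'
    field_simp
  have hs := kummer_summable (a := α/2+1/2) (b := 1/2) (z := η^2) (by positivity) (by norm_num) (by positivity)
  have H := MeasureTheory.hasSum_integral_of_summable_integral_norm
    (μ := MeasureTheory.volume.restrict (Set.Ioi (0:ℝ)))
    (F := fun (s : ℕ) (u : ℝ) => u ^ α * Real.exp (-u^2) * ((2*η*u)^(2*s) / ((2*s).factorial : ℝ)))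
    (fun s => (term_int hα (2*s)).1) ?_
  · have h2 := H.tsum_eq
    simp only [hval, tsum_mul_left, ← Real.cosh_eq_tsum] at h2
    rw [← h2]
    rfl
  · refine (hs.mul_left (1/2 * Real.Gamma (α/2+1/2))).congr fun s => ?_
    rw [← hval]
    apply MeasureTheory.setIntegral_congr_fun measurableSet_Ioi
    intro u hu
    have hu : 0 < u := hu
    simp only
    rw [Real.norm_of_nonneg (by positivity)]

theorem sinh_rep {α η : ℝ} (hα : 0 < α) (hη : 0 < η) :
    ∫ u in Set.Ioi (0:ℝ), u ^ α * Real.exp (-u^2) * Real.sinh (2*η*u)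
      = Real.Gamma (α/2+1) * (η * kummerM (α/2+1) (3/2) (η^2)) := by
  have hval : ∀ s : ℕ, ∫ u in Set.Ioi (0:ℝ), u ^ α * Real.exp (-u^2) * ((2*η*u)^(2*s+1) / ((2*s+1).factorial : ℝ))
      = Real.Gamma (α/2+1) * η * (poch (α/2+1) s / (poch (3/2) s * (Nat.factorial s)) * (η^2) ^ s) := by
    intro s
    rw [(term_int hα (2*s+1)).2, fact_odd]
    have e : (α + (2*s+1 : ℕ) + 1)/2 = (α/2+1) + s := by push_cast; ring
    rw [e, Gamma_poch (by positivity), pow_succ, pow_mul]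
    have : ((2*η)^2)^s = 4^s * (η^2)^s := by rw [← mul_pow]; ring_nf
    rw [this]
    have := (poch_pos (a := 3/2) (by norm_num) s).ne'
    field_simp
  have hs := kummer_summable (a := α/2+1) (b := 3/2) (z := η^2) (by positivity) (by norm_num) (by positivity)
  have H := MeasureTheory.hasSum_integral_of_summable_integral_norm
    (μ := MeasureTheory.volume.restrict (Set.Ioi (0:ℝ)))
    (F := fun (s : ℕ) (u : ℝ) => u ^ α * Real.exp (-u^2) * ((2*η*u)^(2*s+1) / ((2*s+1).factorial : ℝ)))
    (fun s => (term_int hα (2*s+1)).1) ?_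
  · have h2 := H.tsum_eq
    simp only [hval, tsum_mul_left, ← Real.sinh_eq_tsum] at h2
    rw [← h2, mul_assoc]
    rfl
  · refine (hs.mul_left (Real.Gamma (α/2+1) * η)).congr fun s => ?_
    rw [← hval]
    apply MeasureTheory.setIntegral_congr_fun measurableSet_Ioi
    intro u hu
    have hu : 0 < u := hu
    simp only
    rw [Real.norm_of_nonneg (by positivity)]

theorem m1_rep {α η : ℝ} (hα : 0 < α) (hη : 0 < η) :
    kummerM (-α/2) (1/2) (-η^2) = (gG α η + gG α (-η)) / Real.Gamma (α/2+1/2) := by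
  have k := kummer_transf (a := α/2+1/2) (b := 1/2) (z := η^2) (by positivity) (by norm_num) (by positivity)
  have e : (1/2 : ℝ) - (α/2+1/2) = -α/2 := by ring
  rw [e] at k
  have hG := Real.Gamma_pos_of_pos (s := α/2+1/2) (by positivity)
  rw [k, eq_div_iff hG.ne']
  have c := cosh_rep hα hη
  unfold gG
  rw [← MeasureTheory.integral_add (gG_integrable hα η) (gG_integrable hα (-η))]
  calc _ = 2 * Real.exp (-η^2) * (1/2 * Real.Gamma (α/2+1/2) * kummerM (α/2+1/2) (1/2) (η^2)) := by ring
    _ = _ := by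
      rw [← c, ← MeasureTheory.integral_const_mul]
      congr 1
      ext u
      rw [Real.cosh_eq]
      have e1 : Real.exp (-(u-η)^2) = Real.exp (-η^2) * Real.exp (-u^2) * Real.exp (2*η*u) := by
        rw [← Real.exp_add, ← Real.exp_add]; ring_nf
      have e2 : Real.exp (-(u-(-η))^2) = Real.exp (-η^2) * Real.exp (-u^2) * Real.exp (-(2*η*u)) := by
        rw [← Real.exp_add, ← Real.exp_add]; ring_nf
      rw [e1, e2]
      ring

theorem m2_rep {α η : ℝ} (hα : 0 < α) (hη : 0 < η) :
    η * kummerM (-α/2 + 1/2) (3/2) (-η^2) = (gG α η - gG α (-η)) / (2 * Real.Gamma (α/2+1)) := by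
  have k := kummer_transf (a := α/2+1) (b := 3/2) (z := η^2) (by positivity) (by norm_num) (by positivity)
  have e : (3/2 : ℝ) - (α/2+1) = -α/2 + 1/2 := by ring
  rw [e] at k
  have hG := Real.Gamma_pos_of_pos (s := α/2+1) (by positivity)
  rw [k, eq_div_iff (by positivity)]
  have c := sinh_rep hα hη
  unfold gG
  rw [← MeasureTheory.integral_sub (gG_integrable hα η) (gG_integrable hα (-η))]
  calc _ = 2 * Real.exp (-η^2) * (Real.Gamma (α/2+1) * (η * kummerM (α/2+1) (3/2) (η^2))) := by ring
    _ = _ := by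
      rw [← c, ← MeasureTheory.integral_const_mul]
      congr 1
      ext u
      rw [Real.sinh_eq]
      have e1 : Real.exp (-(u-η)^2) = Real.exp (-η^2) * Real.exp (-u^2) * Real.exp (2*η*u) := by
        rw [← Real.exp_add, ← Real.exp_add]; ring_nf
      have e2 : Real.exp (-(u-(-η))^2) = Real.exp (-η^2) * Real.exp (-u^2) * Real.exp (-(2*η*u)) := by
        rw [← Real.exp_add, ← Real.exp_add]; ring_nf
      rw [e1, e2]
      ring

theorem gG_asymp {α : ℝ} (hα : 0 < α) :
    Filter.Tendsto (fun η : ℝ => gG α η / η ^ α) Filter.atTop (nhds (Real.sqrt Real.pi)) := by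
  have hg : ∫ v : ℝ, Real.exp (-v^2) = Real.sqrt Real.pi := by
    have := integral_gaussian 1
    simpa using this
  have e : ∀ᶠ η : ℝ in Filter.atTop, ∫ v : ℝ, (Set.Ioi (-η)).indicator (fun v => (1 + v/η)^α * Real.exp (-v^2)) v
      = gG α η / η ^ α := by
    filter_upwards [Filter.eventually_gt_atTop 0] with η hη
    unfold gG
    rw [← MeasureTheory.integral_div, ← MeasureTheory.integral_indicator measurableSet_Ioi]
    rw [← MeasureTheory.integral_add_right_eq_self ((Set.Ioi (0:ℝ)).indicator _) η]
    congr 1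
    ext v
    by_cases hv : -η < v
    · rw [Set.indicator_of_mem (by exact hv), Set.indicator_of_mem (by simp; linarith)]
      have : 1 + v/η = (v+η)/η := by field_simp; ring
      rw [this, Real.div_rpow (by linarith) hη.le]
      ring_nf
    · rw [Set.indicator_of_notMem (by exact hv), Set.indicator_of_notMem (by simp; linarith)]
  refine Filter.Tendsto.congr' e ?_
  rw [← hg]
  apply MeasureTheory.tendsto_integral_filter_of_dominated_convergence
    (fun v => (1 + |v|)^α * Real.exp (-v^2))
  · refine Filter.Eventually.of_forall fun η => ?_
    apply Measurable.aestronglyMeasurable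
    apply Measurable.indicator _ measurableSet_Ioi
    fun_prop
  · filter_upwards [Filter.eventually_ge_atTop 1] with η hη
    refine Filter.Eventually.of_forall fun v => ?_
    by_cases hv : -η < v
    · rw [Set.indicator_of_mem (by exact hv)]
      have h0 : 0 ≤ 1 + v/η := by
        have : 1 + v/η = (v+η)/η := by field_simp; ring
        rw [this]
        apply div_nonneg <;> linarith
      rw [Real.norm_of_nonneg (by positivity)]
      gcongr
      calc v/η ≤ |v|/η := by gcongr; exact le_abs_self v
        _ ≤ |v| := div_le_self (abs_nonneg v) hη
    · rw [Set.indicator_of_notMem (by exact hv)]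
      simp only [norm_zero]
      positivity
  · -- (1+|v|)^α ≤ 2^α(1+|v|^α)
    have i1 : MeasureTheory.Integrable (fun v : ℝ => Real.exp (-v^2)) := by
      simpa using integrable_exp_neg_mul_sq (b := 1) (by norm_num)
    have i2 : MeasureTheory.Integrable (fun v : ℝ => |v|^α * Real.exp (-v^2)) := by
      have := (integrable_rpow_mul_exp_neg_mul_sq (b := 1) (by norm_num) (s := α) (by linarith))
      have h2 : MeasureTheory.IntegrableOn (fun v : ℝ => |v|^α * Real.exp (-v^2)) (Set.Ioi 0) := by
        refine MeasureTheory.IntegrableOn.congr_fun this.integrableOn ?_ measurableSet_Ioi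
        intro v hv
        have hv : 0 < v := hv
        simp [abs_of_pos hv]
      have h3 := (MeasureTheory.integrable_indicator_iff measurableSet_Ioi).mpr h2
      refine (h3.add h3.comp_neg).congr (Filter.Eventually.of_forall fun v => ?_)
      rcases lt_trichotomy v 0 with hv | hv | hv
      · simp [Set.indicator, hv, hv.le]
      · simp [hv, Real.zero_rpow hα.ne']
      · simp [Set.indicator, hv, hv.le]
    refine MeasureTheory.Integrable.mono' ((i1.add i2).const_mul (2^α)) ?_ ?_
    · apply Measurable.aestronglyMeasurable
      fun_prop
    · refine Filter.Eventually.of_forall fun v => ?_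
      rw [Real.norm_of_nonneg (by positivity)]
      have : (1 + |v|)^α ≤ 2^α * (1 + |v|^α) := by
        have hmax : (1 + |v|)^α ≤ (2 * max 1 |v|)^α := by
          apply Real.rpow_le_rpow (by positivity) _ hα.le
          have := le_max_left 1 |v|
          have := le_max_right 1 |v|
          linarith
        rw [Real.mul_rpow (by norm_num) (by positivity)] at hmax
        refine hmax.trans ?_
        gcongr
        rcases max_cases 1 |v| with h | h <;> rw [h.1]
        · simp; positivity
        · simp
      have h5 := mul_le_mul_of_nonneg_right this (Real.exp_pos (-v^2)).le
      simp only [Pi.add_apply]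
      linarith
  · refine Filter.Eventually.of_forall fun v => ?_
    have h1 : Filter.Tendsto (fun η : ℝ => (1 + v/η)^α * Real.exp (-v^2)) Filter.atTop (nhds (Real.exp (-v^2))) := by
      have h0 : Filter.Tendsto (fun η : ℝ => 1 + v/η) Filter.atTop (nhds 1) := by
        simpa using (Filter.Tendsto.const_div_atTop Filter.tendsto_id v).const_add 1
      have := (h0.rpow_const (p := α) (Or.inl one_ne_zero)).mul_const (Real.exp (-v^2))
      simpa using this
    refine h1.congr' ?_
    filter_upwards [Filter.eventually_gt_atTop (-v)] with η hη
    rw [Set.indicator_of_mem (by simp; linarith)]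

theorem gG_asymp_neg {α : ℝ} (hα : 0 < α) :
    Filter.Tendsto (fun η : ℝ => gG α (-η) / η ^ α) Filter.atTop (nhds 0) := by
  have hlim : Filter.Tendsto (fun η : ℝ => gG α 0 / η ^ α) Filter.atTop (nhds 0) :=
    Filter.Tendsto.const_div_atTop (tendsto_rpow_atTop hα) _
  refine tendsto_of_tendsto_of_tendsto_of_le_of_le' tendsto_const_nhds hlim ?_ ?_
  · filter_upwards [Filter.eventually_gt_atTop 0] with η hη
    have := gG_pos hα (-η)
    positivity
  · filter_upwards [Filter.eventually_gt_atTop 0] with η hη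
    gcongr
    unfold gG
    apply MeasureTheory.setIntegral_mono_on (gG_integrable hα _) (gG_integrable hα _) measurableSet_Ioi
    intro u hu
    have hu : 0 < u := hu
    gcongr
    nlinarith

theorem glasser {c : ℝ} (hc : 0 < c) :
    ∫⁻ s in Set.Ioi (0:ℝ), ENNReal.ofReal (Real.exp (-(s - c/s)^2)) = ENNReal.ofReal (Real.sqrt Real.pi / 2) := by
  have hg : ∫⁻ v : ℝ, ENNReal.ofReal (Real.exp (-v^2)) = ENNReal.ofReal (Real.sqrt Real.pi) := by
    rw [← MeasureTheory.ofReal_integral_eq_lintegral_ofReal]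
    · have := integral_gaussian 1
      simp at this
      rw [this]
    · simpa using integrable_exp_neg_mul_sq (b := 1) (by norm_num)
    · exact Filter.Eventually.of_forall fun v => by positivity
  have im1 : (fun s : ℝ => s - c/s) '' Set.Ioi 0 = Set.univ := by
    apply Set.eq_univ_of_forall
    intro y
    have hsq : Real.sqrt (y^2+4*c)^2 = y^2+4*c := Real.sq_sqrt (by positivity)
    have hlt : |y| < Real.sqrt (y^2+4*c) := by
      rw [← Real.sqrt_sq_eq_abs]
      apply Real.sqrt_lt_sqrt (by positivity)
      linarith
    have hp : 0 < (y + Real.sqrt (y^2+4*c))/2 := by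
      have := neg_abs_le y
      linarith
    refine ⟨(y + Real.sqrt (y^2+4*c))/2, hp, ?_⟩
    simp only
    have : (y + Real.sqrt (y^2+4*c)) ≠ 0 := by linarith
    field_simp
    nlinarith
  have inj1 : Set.InjOn (fun s : ℝ => s - c/s) (Set.Ioi 0) := by
    apply StrictMonoOn.injOn
    intro x hx y hy hxy
    have hx : 0 < x := hx
    have : c/y < c/x := by gcongr
    simp only
    linarith
  have im2 : (fun s : ℝ => c/s) '' Set.Ioi 0 = Set.Ioi 0 := by
    ext y
    constructor
    · rintro ⟨s, hs, rfl⟩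
      have hs : 0 < s := hs
      exact div_pos hc hs
    · intro hy
      have hy : 0 < y := hy
      refine ⟨c/y, div_pos hc hy, ?_⟩
      simp only
      field_simp
  have inj2 : Set.InjOn (fun s : ℝ => c/s) (Set.Ioi 0) := by
    apply StrictAntiOn.injOn
    intro x hx y hy hxy
    have hx : 0 < x := hx
    simp only
    gcongr
  have d2 : ∀ x ∈ Set.Ioi (0:ℝ), HasDerivWithinAt (fun s : ℝ => c/s) (-(c/x^2)) (Set.Ioi 0) x := by
    intro x hx
    have hx : x ≠ 0 := (show 0 < x from hx).ne'
    have := (hasDerivAt_inv hx).const_mul c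
    refine HasDerivAt.hasDerivWithinAt ?_
    convert! this using 1
    field_simp
  have d1 : ∀ x ∈ Set.Ioi (0:ℝ), HasDerivWithinAt (fun s : ℝ => s - c/s) (1 + c/x^2) (Set.Ioi 0) x := by
    intro x hx
    have := (hasDerivWithinAt_id x (Set.Ioi 0)).sub (d2 x hx)
    convert! this using 1
    ring
  have A := MeasureTheory.lintegral_image_eq_lintegral_abs_deriv_mul measurableSet_Ioi d1 inj1
    (fun v => ENNReal.ofReal (Real.exp (-v^2)))
  rw [im1, MeasureTheory.Measure.restrict_univ, hg] at A
  have B := MeasureTheory.lintegral_image_eq_lintegral_abs_deriv_mul measurableSet_Ioi d2 inj2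
    (fun s => ENNReal.ofReal (Real.exp (-(s - c/s)^2)))
  rw [im2] at B
  set I := ∫⁻ s in Set.Ioi (0:ℝ), ENNReal.ofReal (Real.exp (-(s - c/s)^2)) with hI
  have C : ENNReal.ofReal (Real.sqrt Real.pi) = I + I := by
    rw [A]
    nth_rewrite 2 [B]
    rw [hI, ← MeasureTheory.lintegral_add_left (by fun_prop)]
    apply MeasureTheory.setLIntegral_congr_fun measurableSet_Ioi
    intro s hs
    have hs : 0 < s := hs
    have hcs : 0 < c / s^2 := by positivity
    simp only
    rw [abs_of_pos (by positivity), abs_neg, abs_of_pos hcs, ENNReal.ofReal_add (by norm_num) hcs.le]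
    have : c/s - c/(c/s) = -(s - c/s) := by field_simp; ring
    rw [this, neg_sq, add_mul]
    simp
  have hh : ENNReal.ofReal (Real.sqrt Real.pi) = 2 * ENNReal.ofReal (Real.sqrt Real.pi / 2) := by
    rw [← ENNReal.ofReal_ofNat, ← ENNReal.ofReal_mul (by norm_num)]
    congr 1
    ring
  rw [hh, ← two_mul] at C
  exact ((ENNReal.mul_right_inj (by norm_num) (by norm_num)).mp C).symm

theorem U_lint {α η : ℝ} (hα : 0 < α) (hη : 0 < η) :
    ENNReal.ofReal (Real.Gamma (α/2+1)) *
      ∫⁻ t in Set.Ioi (0:ℝ), ENNReal.ofReal (Real.exp (-(η^2) * t) * t ^ (α/2+1/2 - 1) * (1 + t) ^ (1/2 - (α/2+1/2) - 1))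
    = ENNReal.ofReal (2 * Real.sqrt Real.pi * Real.exp (η^2) * gG α (-η)) := by
  have hG := Real.Gamma_pos_of_pos (s := α/2+1) (by positivity)
  rw [← MeasureTheory.lintegral_const_mul' _ _ ENNReal.ofReal_ne_top]
  have s1 : ∀ t ∈ Set.Ioi (0:ℝ), ENNReal.ofReal (Real.Gamma (α/2+1)) * ENNReal.ofReal (Real.exp (-(η^2) * t) * t ^ (α/2+1/2 - 1) * (1 + t) ^ (1/2 - (α/2+1/2) - 1))
      = ∫⁻ w in Set.Ioi (0:ℝ), ENNReal.ofReal (2 * Real.exp (-(η^2) * t) * t ^ (α/2+1/2 - 1) * (w ^ (α+1) * Real.exp (-(1+t) * w^2))) := by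
    intro t ht
    have ht : 0 < t := ht
    rw [← MeasureTheory.ofReal_integral_eq_lintegral_ofReal]
    · rw [← ENNReal.ofReal_mul hG.le, MeasureTheory.integral_const_mul]
      have := integral_rpow_mul_exp_neg_mul_rpow (p := 2) (q := α+1) (b := 1+t) (by norm_num) (by linarith) (by linarith)
      simp_rw [Real.rpow_two] at this
      rw [this]
      have e1 : -(α+1+1)/2 = 1/2 - (α/2+1/2) - 1 := by ring
      have e2 : (α+1+1)/2 = α/2+1 := by ring
      rw [e1, e2]
      congr 1
      ring
    · exact (integrableOn_rpow_mul_exp_neg_mul_sq (b := 1+t) (by linarith) (s := α+1) (by linarith)).const_mul _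
    · filter_upwards [MeasureTheory.ae_restrict_mem measurableSet_Ioi] with w hw
      have hw : 0 < w := hw
      simp only [Pi.zero_apply]
      positivity
  rw [MeasureTheory.setLIntegral_congr_fun measurableSet_Ioi s1]
  rw [MeasureTheory.lintegral_lintegral_swap (by
    apply Measurable.aemeasurable
    simp only [Function.uncurry_def]
    fun_prop)]
  have s3 : ∀ w ∈ Set.Ioi (0:ℝ), ∫⁻ t in Set.Ioi (0:ℝ), ENNReal.ofReal (2 * Real.exp (-(η^2) * t) * t ^ (α/2+1/2 - 1) * (w ^ (α+1) * Real.exp (-(1+t) * w^2)))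
      = ∫⁻ u in Set.Ioi (0:ℝ), ENNReal.ofReal (4 * Real.exp (η^2) * (u^α * Real.exp (-(u - -η)^2))) * ENNReal.ofReal (Real.exp (-(w - η*u/w)^2)) := by
    intro w hw
    have hw : 0 < w := hw
    have im : (fun u : ℝ => (u/w)^2) '' Set.Ioi 0 = Set.Ioi 0 := by
      ext y
      constructor
      · rintro ⟨s, hs, rfl⟩
        have hs : 0 < s := hs
        simp only [Set.mem_Ioi]
        positivity
      · intro hy
        have hy : 0 < y := hy
        refine ⟨w * Real.sqrt y, by simp only [Set.mem_Ioi]; positivity, ?_⟩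
        simp only
        rw [mul_div_cancel_left₀ _ hw.ne', Real.sq_sqrt hy.le]
    have inj : Set.InjOn (fun u : ℝ => (u/w)^2) (Set.Ioi 0) := by
      apply StrictMonoOn.injOn
      intro x hx y hy hxy
      have hx : 0 < x := hx
      simp only
      gcongr
    have d : ∀ u ∈ Set.Ioi (0:ℝ), HasDerivWithinAt (fun u : ℝ => (u/w)^2) (2*u/w^2) (Set.Ioi 0) u := by
      intro u hu
      refine HasDerivAt.hasDerivWithinAt ?_
      have := ((hasDerivAt_id u).div_const w).pow 2
      convert! this using 1
      simp
      field_simp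
    have A := MeasureTheory.lintegral_image_eq_lintegral_abs_deriv_mul measurableSet_Ioi d inj
      (fun t => ENNReal.ofReal (2 * Real.exp (-(η^2) * t) * t ^ (α/2+1/2 - 1) * (w ^ (α+1) * Real.exp (-(1+t) * w^2))))
    rw [im] at A
    rw [A]
    apply MeasureTheory.setLIntegral_congr_fun measurableSet_Ioi
    intro u hu
    have hu : 0 < u := hu
    simp only
    rw [← ENNReal.ofReal_mul (by positivity), ← ENNReal.ofReal_mul (by positivity), abs_of_pos (by positivity)]
    congr 1
    have p1 : ((u/w)^2) ^ (α/2+1/2-1) = u^α / u / (w^α / w) := by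
      rw [← Real.rpow_two, ← Real.rpow_mul (by positivity), Real.div_rpow hu.le hw.le]
      have : 2 * (α/2+1/2-1) = α - 1 := by ring
      rw [this, Real.rpow_sub_one hu.ne', Real.rpow_sub_one hw.ne']
    have p2 : w^(α+1) = w^α * w := Real.rpow_add_one hw.ne' α
    have p3 : Real.exp (-(η^2) * (u/w)^2) * Real.exp (-(1 + (u/w)^2) * w^2)
        = Real.exp (η^2) * Real.exp (-(u - -η)^2) * Real.exp (-(w - η*u/w)^2) := by
      rw [← Real.exp_add, ← Real.exp_add, ← Real.exp_add]
      congr 1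
      field_simp
      ring
    rw [p1, p2]
    have hwα : w^α ≠ 0 := by positivity
    calc _ = 4 * u^α * (Real.exp (-(η^2) * (u/w)^2) * Real.exp (-(1 + (u/w)^2) * w^2)) := by
          field_simp
          ring
      _ = _ := by rw [p3]; ring
  rw [MeasureTheory.setLIntegral_congr_fun measurableSet_Ioi s3]
  rw [MeasureTheory.lintegral_lintegral_swap (by
    apply Measurable.aemeasurable
    simp only [Function.uncurry_def]
    fun_prop)]
  have s5 : ∀ u ∈ Set.Ioi (0:ℝ), ∫⁻ w in Set.Ioi (0:ℝ), ENNReal.ofReal (4 * Real.exp (η^2) * (u^α * Real.exp (-(u - -η)^2))) * ENNReal.ofReal (Real.exp (-(w - η*u/w)^2))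
      = ENNReal.ofReal (2 * Real.sqrt Real.pi * Real.exp (η^2) * (u^α * Real.exp (-(u - -η)^2))) := by
    intro u hu
    have hu : 0 < u := hu
    rw [MeasureTheory.lintegral_const_mul' _ _ ENNReal.ofReal_ne_top, glasser (by positivity), ← ENNReal.ofReal_mul (by positivity)]
    congr 1
    ring
  rw [MeasureTheory.setLIntegral_congr_fun measurableSet_Ioi s5]
  rw [← MeasureTheory.ofReal_integral_eq_lintegral_ofReal, MeasureTheory.integral_const_mul]
  · rfl
  · exact (gG_integrable hα (-η)).const_mul _
  · filter_upwards [MeasureTheory.ae_restrict_mem measurableSet_Ioi] with w hw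
    have hw : 0 < w := hw
    simp only [Pi.zero_apply]
    positivity

theorem U_rep {α η : ℝ} (hα : 0 < α) (hη : 0 < η) :
    tricomiU (α/2+1/2) (1/2) (η^2) =
      2 * Real.sqrt Real.pi * Real.exp (η^2) * gG α (-η) / (Real.Gamma (α/2+1/2) * Real.Gamma (α/2+1)) := by
  have hG := Real.Gamma_pos_of_pos (s := α/2+1) (by positivity)
  have hG2 := Real.Gamma_pos_of_pos (s := α/2+1/2) (by positivity)
  have hp := gG_pos hα (-η)
  unfold tricomiU
  rw [MeasureTheory.integral_eq_lintegral_of_nonneg_ae]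
  · have h := congrArg ENNReal.toReal (U_lint hα hη)
    rw [ENNReal.toReal_mul, ENNReal.toReal_ofReal hG.le, ENNReal.toReal_ofReal (by positivity)] at h
    rw [← h]
    field_simp
  · filter_upwards [MeasureTheory.ae_restrict_mem measurableSet_Ioi] with t ht
    have ht : 0 < t := ht
    simp only [Pi.zero_apply]
    positivity
  · apply Measurable.aestronglyMeasurable
    fun_prop

/-- with the displayed coefficients `F_s`, `E_s`, the solid-phase temperature
`Ψ_s(x,t)` satisfies `lim_{t→0⁺} Ψ_s(x,t) = −T_i x^α` for every `x > 0`. -/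
theorem statement_14 (α ds Ti ν ω : ℝ) (hα : 0 < α) (hαnotint : ∀ n : ℤ, α ≠ n)
    (hds : 0 < ds) (hTi : 0 < Ti) (hν : 0 < ν) (hω : 0 < ω)
    (Fs Es : ℝ)
    (hFs : Fs = -Ti * (2:ℝ) ^ (α + 1) * ds ^ (α / 2) *
      kummerM (α / 2 + 1 / 2) (1 / 2) (ν ^ 2 * ω ^ 2) /
        tricomiU (α / 2 + 1 / 2) (1 / 2) (ν ^ 2 * ω ^ 2))
    (hEs : Es = -ν * ω * kummerM (-α / 2 + 1 / 2) (3 / 2) (-(ν ^ 2 * ω ^ 2)) * Fs /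
      kummerM (-α / 2) (1 / 2) (-(ν ^ 2 * ω ^ 2)))
    (Ψs : ℝ → ℝ → ℝ)
    (hΨs : ∀ x t : ℝ, Ψs x t =
      t ^ (α / 2) *
        (Es * kummerM (-α / 2) (1 / 2) (-(x / (2 * Real.sqrt (ds * t))) ^ 2)
          + Fs * (x / (2 * Real.sqrt (ds * t))) *
              kummerM (-α / 2 + 1 / 2) (3 / 2) (-(x / (2 * Real.sqrt (ds * t))) ^ 2))) :
    ∀ x : ℝ, 0 < x →
      Filter.Tendsto (fun t : ℝ => Ψs x t) (nhdsWithin 0 (Set.Ioi 0))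
        (nhds (-Ti * x ^ α)) := by
  intro x hx
  have hη0 : 0 < ν * ω := by positivity
  have hG := Real.Gamma_pos_of_pos (s := α/2+1) (by positivity)
  have hG2 := Real.Gamma_pos_of_pos (s := α/2+1/2) (by positivity)
  have hB0 := gG_pos hα (-(ν*ω))
  have hA0 := gG_pos hα (ν*ω)
  have hm1 := m1_rep hα hη0
  have hm2 := m2_rep hα hη0
  have hU := U_rep hα hη0
  have hk := kummer_transf (a := α/2+1/2) (b := 1/2) (z := (ν*ω)^2) (by positivity) (by norm_num) (by positivity)
  have e0 : (1/2 : ℝ) - (α/2+1/2) = -α/2 := by ring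
  rw [e0, hm1] at hk
  rw [← mul_pow] at hFs hEs
  set A0 := gG α (ν*ω)
  set B0 := gG α (-(ν*ω))
  have hpi : 0 < Real.sqrt Real.pi := Real.sqrt_pos.mpr Real.pi_pos
  have hk' : kummerM (α/2+1/2) (1/2) ((ν*ω)^2) = Real.exp ((ν*ω)^2) * ((A0+B0)/Real.Gamma (α/2+1/2)) := by
    rw [hk, ← mul_assoc, ← Real.exp_add]
    simp
  have hF : Fs = -Ti * (2:ℝ)^(α+1) * ds^(α/2) * ((A0+B0) * Real.Gamma (α/2+1) / (2 * Real.sqrt Real.pi * B0)) := by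
    rw [hFs, hk', hU]
    have := Real.exp_pos ((ν*ω)^2)
    field_simp
  have hE : Es = - Fs * ((A0 - B0) * Real.Gamma (α/2+1/2) / (2 * Real.Gamma (α/2+1) * (A0+B0))) := by
    have : Es = -((ν*ω) * kummerM (-α / 2 + 1 / 2) (3 / 2) (-(ν*ω)^2)) * Fs / kummerM (-α / 2) (1 / 2) (-(ν*ω)^2) := by
      rw [hEs]; ring
    rw [this, hm1, hm2]
    have : A0 + B0 ≠ 0 := by positivity
    field_simp
  -- the similarity variable
  have hηt : Filter.Tendsto (fun t : ℝ => x / (2 * Real.sqrt (ds * t))) (nhdsWithin 0 (Set.Ioi 0)) Filter.atTop := by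
    apply Filter.Tendsto.const_mul_atTop hx
    apply Filter.Tendsto.inv_tendsto_nhdsGT_zero
    rw [tendsto_nhdsWithin_iff]
    constructor
    · have : Continuous (fun t : ℝ => 2 * Real.sqrt (ds * t)) := by fun_prop
      have h := this.tendsto 0
      simp only [mul_zero, Real.sqrt_zero] at h
      exact h.mono_left nhdsWithin_le_nhds
    · filter_upwards [self_mem_nhdsWithin] with t ht
      have ht : 0 < t := ht
      simp only [Set.mem_Ioi]
      positivity
  have hA := (gG_asymp hα).comp hηt
  have hB := (gG_asymp_neg hα).comp hηt
  set L := x^α / (2^α * ds^(α/2)) with hL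
  have hlim : Filter.Tendsto (fun t : ℝ => L * (Es * (((gG α (x / (2 * Real.sqrt (ds * t))) / (x / (2 * Real.sqrt (ds * t)))^α) + (gG α (-(x / (2 * Real.sqrt (ds * t)))) / (x / (2 * Real.sqrt (ds * t)))^α)) / Real.Gamma (α/2+1/2))
      + Fs * (((gG α (x / (2 * Real.sqrt (ds * t))) / (x / (2 * Real.sqrt (ds * t)))^α) - (gG α (-(x / (2 * Real.sqrt (ds * t)))) / (x / (2 * Real.sqrt (ds * t)))^α)) / (2 * Real.Gamma (α/2+1)))))
      (nhdsWithin 0 (Set.Ioi 0))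
      (nhds (L * (Es * ((Real.sqrt Real.pi + 0) / Real.Gamma (α/2+1/2)) + Fs * ((Real.sqrt Real.pi - 0) / (2 * Real.Gamma (α/2+1)))))) :=
    ((((hA.add hB).div_const _).const_mul Es).add (((hA.sub hB).div_const _).const_mul Fs)).const_mul L
  have hval : L * (Es * ((Real.sqrt Real.pi + 0) / Real.Gamma (α/2+1/2)) + Fs * ((Real.sqrt Real.pi - 0) / (2 * Real.Gamma (α/2+1)))) = -Ti * x^α := by
    have h1 : A0 + B0 ≠ 0 := by positivity
    have h2 : (2:ℝ)^α ≠ 0 := by positivity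
    have h3 : ds^(α/2) ≠ 0 := by positivity
    rw [hE, hF, hL, Real.rpow_add_one (by norm_num)]
    field_simp
    ring
  rw [hval] at hlim
  refine hlim.congr' ?_
  filter_upwards [self_mem_nhdsWithin] with t ht
  have ht : 0 < t := ht
  rw [hΨs, mul_assoc Fs]
  have hη : 0 < x / (2 * Real.sqrt (ds * t)) := by positivity
  rw [m1_rep hα hη, m2_rep hα hη]
  have hpow : L = t^(α/2) * (x / (2 * Real.sqrt (ds * t)))^α := by
    have hs : Real.sqrt (ds*t) ^ α = ds^(α/2) * t^(α/2) := by
      rw [Real.sqrt_eq_rpow, ← Real.rpow_mul (by positivity), Real.mul_rpow hds.le ht.le]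
      ring_nf
    rw [hL, Real.div_rpow hx.le (by positivity), Real.mul_rpow (by norm_num) (by positivity), hs]
    have h3 : ds^(α/2) ≠ 0 := by positivity
    have h4 : t^(α/2) ≠ 0 := by positivity
    field_simp
  rw [hpow]
  have h5 : (x / (2 * Real.sqrt (ds * t)))^α ≠ 0 := by positivity
  generalize (x / (2 * Real.sqrt (ds * t)))^α = P at *
  field_simp
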